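/- arXiv:math/0602131 — 3 statements merged into one kernel-verified Lean document; each statement's English description precedes it below -/
import Mathlib

section
/- Let G be a finitely generated nilpotent group, H ≤ G of finite index, and f : H → G a monomorphism. Then the image f(H) has finite index in G. -/
open scoped commutatorElement

/-- Every descending chain of subgroups eventually has finite-index steps. -/
def FinStep (G : Type*) [Group G] : Prop :=
  ∀ K : ℕ → Subgroup G, Antitone K → ∃ N, ∀ n, N ≤ n → (K (n + 1)).relIndex (K n) ≠ 0

theorem relIndex_ne_zero_of_ext {G Q : Type*} [Group G] [Group Q] (φ : G →* Q)
    (L K : Subgroup G) (hLK : L ≤ K) (h1 : L.relIndex (K ⊓ φ.ker) ≠ 0)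
    (h2 : (L.map φ).relIndex (K.map φ) ≠ 0) : L.relIndex K ≠ 0 := by
  set L' : Subgroup G := (L.map φ).comap φ ⊓ K with hL'
  have hle : K ⊓ φ.ker ≤ L' := by
    rintro x ⟨hx, hx'⟩
    refine ⟨?_, hx⟩
    have h1 : φ x = 1 := hx'
    change φ x ∈ L.map φ
    rw [h1]
    exact one_mem _
  have hLL' : L ≤ L' := le_inf (Subgroup.le_comap_map φ L) hLK
  have hA : L.relIndex L' ≠ 0 := by
    have hs : Function.Surjective (Subgroup.quotientSubgroupOfEmbeddingOfLE L hle) := by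
      intro q
      induction q using QuotientGroup.induction_on with
      | H x =>
        obtain ⟨x, ⟨l, hl, hlx⟩, hxK⟩ := x
        refine ⟨QuotientGroup.mk ⟨x * l⁻¹, K.mul_mem hxK (K.inv_mem (hLK hl)), ?_⟩, ?_⟩
        · change φ (x * l⁻¹) = 1
          rw [map_mul, map_inv, hlx, mul_inv_cancel]
        · rw [Subgroup.quotientSubgroupOfEmbeddingOfLE_apply_mk, QuotientGroup.eq]
          rw [Subgroup.mem_subgroupOf]
          simpa using hl
    have : L.relIndex (K ⊓ φ.ker) = L.relIndex L' :=
      Nat.card_congr (Equiv.ofBijective _ ⟨Function.Embedding.injective _, hs⟩)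
    rwa [← this]
  have hB : L'.relIndex K ≠ 0 := by
    rw [hL', Subgroup.inf_relIndex_right, Subgroup.relIndex_comap]
    exact h2
  exact Subgroup.relIndex_ne_zero_trans hA hB

theorem FinStep.ext {G Q : Type*} [Group G] [Group Q] (φ : G →* Q)
    (hN : FinStep φ.ker) (hQ : FinStep Q) : FinStep G := by
  intro K hK
  obtain ⟨a, ha⟩ := hN (fun n => (K n).subgroupOf φ.ker) (fun m n h => Subgroup.comap_mono (hK h))
  obtain ⟨b, hb⟩ := hQ (fun n => (K n).map φ) (fun m n h => Subgroup.map_mono (hK h))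
  refine ⟨max a b, fun n hn => relIndex_ne_zero_of_ext φ _ _ (hK (Nat.le_succ n)) ?_
    (hb n (le_trans (le_max_right _ _) hn))⟩
  have := ha n (le_trans (le_max_left _ _) hn)
  rwa [Subgroup.subgroupOf, Subgroup.relIndex_comap, Subgroup.subgroupOf_map_subtype] at this

theorem FinStep.ext' {G : Type*} [Group G] (N : Subgroup G) [N.Normal]
    (hN : FinStep N) (hQ : FinStep (G ⧸ N)) : FinStep G := by
  refine FinStep.ext (QuotientGroup.mk' N) ?_ hQ
  rw [QuotientGroup.ker_mk']
  exact hN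

theorem finStep_zpowers {G : Type*} [Group G] (a : G) : FinStep (Subgroup.zpowers a) := by
  have key : ∀ K : Subgroup (Subgroup.zpowers a), K ≠ ⊥ → K.index ≠ 0 := by
    intro K hK
    obtain ⟨y, hy, hy1⟩ := K.bot_or_exists_ne_one.resolve_left hK
    obtain ⟨x, k, hk⟩ := y
    have hx := hy
    have hx1 := hy1
    dsimp only at hk
    have hk0 : k ≠ 0 := by
      rintro rfl
      apply hx1
      ext
      simpa using hk.symm
    have : NeZero k := ⟨hk0⟩
    let g : Subgroup.zpowers a := ⟨a, Subgroup.mem_zpowers a⟩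
    have hgk : g ^ k ∈ K := by
      convert hx using 1
      ext
      simpa [g] using hk
    have : Finite (Subgroup.zpowers a ⧸ K) := by
      refine Finite.of_surjective
        (fun i : Set.Ico (0 : ℤ) |k| => ((g ^ (i : ℤ) : Subgroup.zpowers a) : Subgroup.zpowers a ⧸ K)) ?_
      intro q
      induction q using QuotientGroup.induction_on with
      | H y =>
        obtain ⟨y, m, hm⟩ := y
        dsimp only at hm
        refine ⟨⟨m % k, Int.emod_nonneg m hk0, Int.emod_lt_abs m hk0⟩, ?_⟩
        have : (⟨y, m, hm⟩ : Subgroup.zpowers a) = g ^ (m % k) * (g ^ k) ^ (m / k) := by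
          rw [← zpow_mul, ← zpow_add, Int.emod_add_mul_ediv]
          ext
          simpa [g] using hm.symm
        rw [QuotientGroup.eq, this, inv_mul_cancel_left]
        exact K.zpow_mem hgk _
    exact Subgroup.index_ne_zero_of_finite
  intro K hK
  by_cases h : ∃ n, K n = ⊥
  · obtain ⟨N, hN⟩ := h
    refine ⟨N, fun n hn => ?_⟩
    have : K n = ⊥ := le_bot_iff.mp (hN ▸ hK hn)
    rw [this, Subgroup.relIndex_bot_right]
    exact one_ne_zero
  · push Not at h
    refine ⟨0, fun n _ h0 => key _ (h (n + 1)) ?_⟩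
    exact Subgroup.index_eq_zero_of_relIndex_eq_zero h0

theorem finStep_comm (n : ℕ) : ∀ (A : Type*) [Group A], (∀ a b : A, a * b = b * a) →
    ∀ g : Fin n → A, Subgroup.closure (Set.range g) = ⊤ → FinStep A := by
  induction n with
  | zero =>
    intro A _ _ g hg K _
    have hb : ∀ H : Subgroup A, H = ⊥ := by
      intro H
      rw [← le_bot_iff]
      have : (⊤ : Subgroup A) = ⊥ := by rw [← hg]; simp
      exact this ▸ le_top
    exact ⟨0, fun n _ => by rw [hb (K n)]; simp⟩
  | succ n ih =>
    intro A _ hc g hg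
    have : (Subgroup.zpowers (g 0)).Normal := ⟨fun x hx y => by
      rwa [hc y x, mul_inv_cancel_right]⟩
    refine FinStep.ext' (Subgroup.zpowers (g 0)) (finStep_zpowers _) ?_
    refine ih _ ?_ (fun i => ((g i.succ : A) : A ⧸ Subgroup.zpowers (g 0))) ?_
    · intro a b
      induction a using QuotientGroup.induction_on with
      | H a =>
        induction b using QuotientGroup.induction_on with
        | H b => rw [← QuotientGroup.mk_mul, ← QuotientGroup.mk_mul, hc]
    · rw [eq_top_iff, ← Subgroup.map_top_of_surjective _
        (QuotientGroup.mk'_surjective (Subgroup.zpowers (g 0))), ← hg, MonoidHom.map_closure,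
        Subgroup.closure_le]
      rintro _ ⟨_, ⟨i, rfl⟩, rfl⟩
      refine Fin.cases ?_ (fun j => ?_) i
      · have : (QuotientGroup.mk' (Subgroup.zpowers (g 0))) (g 0) = 1 :=
          (QuotientGroup.eq_one_iff _).mpr (Subgroup.mem_zpowers _)
        rw [this]
        exact one_mem _
      · exact Subgroup.subset_closure ⟨j, rfl⟩

theorem lcs_fg {G : Type*} [Group G] (X : Set G) (hX : X.Finite)
    (hXG : Subgroup.closure X = ⊤) (i : ℕ) :
    ∃ T : Set G, T.Finite ∧ (⊤ : Subgroup G).lowerCentralSeries i =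
      Subgroup.closure T ⊔ (⊤ : Subgroup G).lowerCentralSeries (i + 1) := by
  induction i with
  | zero =>
    exact ⟨X, hX, by rw [hXG]; simp⟩
  | succ i ih =>
    obtain ⟨T, hT, hTi⟩ := ih
    refine ⟨Set.image2 (fun t x => ⁅t, x⁆) T X, hT.image2 _ hX, ?_⟩
    set M : Subgroup G := Subgroup.closure (Set.image2 (fun t x => ⁅t, x⁆) T X) ⊔
      (⊤ : Subgroup G).lowerCentralSeries (i + 1 + 1) with hM
    have hTle : ∀ t ∈ T, t ∈ (⊤ : Subgroup G).lowerCentralSeries i := fun t ht =>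
      hTi ▸ Subgroup.mem_sup_left (Subgroup.subset_closure ht)
    have hMle : M ≤ (⊤ : Subgroup G).lowerCentralSeries (i + 1) := by
      refine sup_le ?_ (Subgroup.lowerCentralSeries_antitone _ (Nat.le_succ _))
      rw [Subgroup.closure_le]
      rintro _ ⟨t, ht, x, _, rfl⟩
      exact Subgroup.commutator_mem_commutator (hTle t ht) (Subgroup.mem_top x)
    have hcomm : ∀ m ∈ (⊤ : Subgroup G).lowerCentralSeries (i + 1), ∀ g : G, ⁅m, g⁆ ∈ M :=
      fun m hm g => Subgroup.mem_sup_right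
        (Subgroup.commutator_mem_commutator hm (Subgroup.mem_top g))
    have : M.Normal := ⟨fun m hm g => by
      have h1 := M.mul_mem (M.inv_mem (hcomm m (hMle hm) g)) hm
      have : ⁅m, g⁆⁻¹ * m = g * m * g⁻¹ := by
        rw [commutatorElement_def]; group
      rwa [this] at h1⟩
    refine le_antisymm ?_ hMle
    have hC : ∀ g h : G, ⁅g, h⁆ ∈ M ↔
        (QuotientGroup.mk' M g) * (QuotientGroup.mk' M h) =
          (QuotientGroup.mk' M h) * (QuotientGroup.mk' M g) := by
      intro g h
      rw [← commutatorElement_eq_one_iff_mul_comm, ← map_commutatorElement]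
      exact (QuotientGroup.eq_one_iff _).symm
    have hcen : (⊤ : Subgroup G).lowerCentralSeries i ≤
        (Subgroup.center (G ⧸ M)).comap (QuotientGroup.mk' M) := by
      rw [hTi]
      refine sup_le ?_ ?_
      · rw [Subgroup.closure_le]
        intro t ht
        have htop : (⊤ : Subgroup G) ≤
            (Subgroup.centralizer {QuotientGroup.mk' M t}).comap (QuotientGroup.mk' M) := by
          rw [← hXG, Subgroup.closure_le]
          intro x hx
          change _ ∈ Subgroup.centralizer _
          rw [Subgroup.mem_centralizer_singleton_iff]
          exact ((hC t x).mp (Subgroup.mem_sup_left (Subgroup.subset_closure ⟨t, ht, x, hx, rfl⟩))).symm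
        change _ ∈ Subgroup.center _
        rw [Subgroup.mem_center_iff]
        intro q
        obtain ⟨g, rfl⟩ := QuotientGroup.mk'_surjective M q
        have := htop (Subgroup.mem_top g)
        rw [Subgroup.mem_comap, Subgroup.mem_centralizer_singleton_iff] at this
        exact this
      · intro m hm
        rw [Subgroup.mem_comap, Subgroup.mem_center_iff]
        intro q
        obtain ⟨g, rfl⟩ := QuotientGroup.mk'_surjective M q
        exact ((hC m g).mp (hcomm m hm g)).symm
    rw [Subgroup.lowerCentralSeries_succ, Subgroup.commutator_le]
    intro a ha b _
    have := hcen ha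
    rw [Subgroup.mem_comap, Subgroup.mem_center_iff] at this
    exact (hC a b).mpr (this _).symm

theorem finStep_nilp (n : ℕ) : ∀ (G : Type*) [Group G], Group.FG G →
    (⊤ : Subgroup G).lowerCentralSeries n = ⊥ → FinStep G := by
  induction n with
  | zero =>
    intro G _ _ h K _
    have hb : ∀ H : Subgroup G, H = ⊥ := by
      intro H
      rw [← le_bot_iff]
      have : (⊤ : Subgroup G) = ⊥ := h
      exact this ▸ le_top
    exact ⟨0, fun n _ => by rw [hb (K n)]; simp⟩
  | succ n ih =>
    intro G _ hG h
    obtain ⟨X, hX, hXf⟩ := Group.fg_iff.mp hG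
    obtain ⟨T, hT, hTn⟩ := lcs_fg X hXf hX n
    rw [h, sup_bot_eq] at hTn
    set N := (⊤ : Subgroup G).lowerCentralSeries n with hN
    refine FinStep.ext' N ?_ ?_
    · have hfg : Group.FG N := by
        rw [Group.fg_iff_subgroup_fg, Subgroup.fg_iff]
        exact ⟨T, hTn.symm, hT⟩
      obtain ⟨S, hS, hSf⟩ := Group.fg_iff.mp hfg
      obtain ⟨k, g, hg⟩ := hSf.fin_embedding
      refine finStep_comm k N ?_ g (by rw [hg, hS])
      intro a b
      have : ⁅(a : G), (b : G)⁆ ∈ (⊤ : Subgroup G).lowerCentralSeries (n + 1) :=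
        Subgroup.commutator_mem_commutator a.2 (Subgroup.mem_top _)
      rw [h, Subgroup.mem_bot, commutatorElement_eq_one_iff_mul_comm] at this
      exact Subtype.ext this
    · refine ih (G ⧸ N) (QuotientGroup.fg N) ?_
      rw [← Subgroup.map_top_of_surjective _ (QuotientGroup.mk'_surjective N),
        ← Subgroup.map_lowerCentralSeries, ← hN, Subgroup.map_eq_bot_iff, QuotientGroup.ker_mk']

/-- The chain obtained by iterating `f`. -/
def iterChain {G : Type*} [Group G] (H : Subgroup G) (f : H →* G) : ℕ → Subgroup G
  | 0 => ⊤
  | n + 1 => ((iterChain H f n).subgroupOf H).map f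

theorem stmt_7 {G : Type*} [Group G] [Group.IsNilpotent G] (hfg : Group.FG G)
    (H : Subgroup G) (hH : H.FiniteIndex)
    (f : H →* G) (hf : Function.Injective f) :
    f.range.FiniteIndex := by
  obtain ⟨c, hc⟩ := Subgroup.nilpotent_iff_lowerCentralSeries.mp ‹Group.IsNilpotent G›
  have hP := finStep_nilp c G hfg hc
  have hstep : ∀ n, iterChain H f (n + 1) ≤ iterChain H f n := by
    intro n
    induction n with
    | zero => exact le_top
    | succ n ih => exact Subgroup.map_mono (Subgroup.comap_mono ih)
  obtain ⟨N, hN⟩ := hP (iterChain H f) (antitone_nat_of_succ_le hstep)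
  by_contra hcon
  have h0 : f.range.index = 0 := by
    by_contra h
    exact hcon ⟨h⟩
  have hall : ∀ n, (iterChain H f (n + 1)).relIndex (iterChain H f n) = 0 := by
    intro n
    induction n with
    | zero =>
      change (((⊤ : Subgroup G).subgroupOf H).map f).relIndex ⊤ = 0
      rw [Subgroup.relIndex_top_right, Subgroup.top_subgroupOf, ← MonoidHom.range_eq_map, h0]
    | succ n ih =>
      change (((iterChain H f (n + 1)).subgroupOf H).map f).relIndex
        (((iterChain H f n).subgroupOf H).map f) = 0
      rw [Subgroup.relIndex_map_map_of_injective _ _ hf, Subgroup.subgroupOf,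
        Subgroup.relIndex_comap, Subgroup.subgroupOf_map_subtype]
      by_contra hne
      refine Subgroup.relIndex_ne_zero_trans hne ?_ ih
      rw [Subgroup.inf_relIndex_left]
      intro hz
      exact hH.index_ne_zero (Subgroup.index_eq_zero_of_relIndex_eq_zero hz)
  exact hN N le_rfl (hall N)
end

section
/- Let K and P be groups with P a transitive permutation group on Y = {1,…,m}, and let W = K wr_Y P be the wreath product, B = K^Y the base group. Let G ≤ W be a nilpotent subgroup that induces a transitive action on Y. If x = (x_1,…,x_m)σ ∈ G with σ fixing the point 1 and x_1 of finite order, then x has finite order. -/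
/-- The wreath product `K wr_Y Perm(Y)` with `Y = Fin m`, as a semidirect product of the
base group `K^Y` with the symmetric group acting by permuting coordinates. -/
abbrev WreathPerm (K : Type*) [Group K] (m : ℕ) : Type _ :=
  (Fin m → K) ⋊[mulAutArrow] Equiv.Perm (Fin m)

open Subgroup commutatorElement in
theorem aux_comm {Q : Type*} [Group Q] (V : Subgroup Q) [V.Normal]
    (hV : ∀ v ∈ V, ∀ n : ℕ, 0 < n → v ^ n = 1 → v = 1) (a : Q) (n : ℕ) (hn : 0 < n) :
    ∀ j : ℕ, ∀ z ∈ V, z ∈ Subgroup.upperCentralSeries Q j → Commute z (a ^ n) → Commute z a := by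
  intro j
  induction j with
  | zero =>
    intro z _ hz _
    rw [Subgroup.upperCentralSeries_zero, mem_bot] at hz
    subst hz
    exact Commute.one_left a
  | succ j ih =>
    intro z hzV hz hc
    have hwZ : ⁅z, a⁆ ∈ Subgroup.upperCentralSeries Q j := Subgroup.mem_upperCentralSeries_succ_iff.mp hz a
    have hw : ⁅z, a⁆ = z * (a * z⁻¹ * a⁻¹) := by simp [commutatorElement_def, mul_assoc]
    have hwV : ⁅z, a⁆ ∈ V := by
      rw [hw]
      exact V.mul_mem hzV (Subgroup.Normal.conj_mem inferInstance _ (V.inv_mem hzV) _)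
    have haa : Commute a (a ^ n) := Commute.self_pow a n
    have hwc : Commute ⁅z, a⁆ (a ^ n) := by
      rw [hw]
      exact hc.mul_left ((haa.mul_left hc.inv_left).mul_left haa.inv_left)
    have hwa : Commute ⁅z, a⁆ a := ih _ hwV hwZ hwc
    have h1 : z * a * z⁻¹ = ⁅z, a⁆ * a := by simp [commutatorElement_def]
    have h2 : z * a ^ n * z⁻¹ = ⁅z, a⁆ ^ n * a ^ n := by
      rw [← conj_pow, h1, hwa.mul_pow]
    have h3 : ⁅z, a⁆ ^ n = 1 := by
      rw [hc.eq, mul_inv_cancel_right] at h2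
      exact (right_eq_mul.mp h2)
    have h4 := hV _ hwV n hn h3
    exact commutatorElement_eq_one_iff_commute.mp h4

open Subgroup commutatorElement in
theorem aux_map_ucs {G H : Type*} [Group G] [Group H] (f : G →* H)
    (hf : Function.Surjective f) (j : ℕ) :
    ∀ z ∈ Subgroup.upperCentralSeries G j, f z ∈ Subgroup.upperCentralSeries H j := by
  induction j with
  | zero =>
    intro z hz
    rw [Subgroup.upperCentralSeries_zero, mem_bot] at hz ⊢
    simp [hz]
  | succ j ih =>
    intro z hz
    rw [Subgroup.mem_upperCentralSeries_succ_iff] at hz ⊢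
    intro y
    obtain ⟨y, rfl⟩ := hf y
    rw [← map_commutatorElement]
    exact ih _ (hz y)

theorem aux_conj {G : Type*} [Group G] {a : G} (h : IsOfFinOrder a) (g : G) :
    IsOfFinOrder (g * a * g⁻¹) := by
  rw [isOfFinOrder_iff_pow_eq_one] at *
  obtain ⟨n, hn, h⟩ := h
  exact ⟨n, hn, by rw [conj_pow, h]; simp⟩

theorem aux_pow {G : Type*} [Group G] {a : G} (n : ℕ) (hn : 0 < n) (h : IsOfFinOrder (a ^ n)) :
    IsOfFinOrder a := by
  rw [isOfFinOrder_iff_pow_eq_one] at *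
  obtain ⟨k, hk, h⟩ := h
  exact ⟨n * k, by positivity, by rw [pow_mul, h]⟩

open Subgroup commutatorElement in
theorem aux_tors_mul_ucs {G : Type*} [Group G] (i : ℕ) :
    ∀ a ∈ Subgroup.upperCentralSeries G i, ∀ b ∈ Subgroup.upperCentralSeries G i,
      IsOfFinOrder a → IsOfFinOrder b → IsOfFinOrder (a * b) := by
  induction i with
  | zero =>
    intro a ha b hb _ _
    rw [Subgroup.upperCentralSeries_zero, mem_bot] at ha hb
    subst ha hb
    simp
  | succ i ih =>
    intro a ha b hb fa fb
    let T : Subgroup G :=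
      { carrier := {x | x ∈ Subgroup.upperCentralSeries G i ∧ IsOfFinOrder x}
        one_mem' := ⟨one_mem _, IsOfFinOrder.one⟩
        mul_mem' := fun {x y} hx hy => ⟨mul_mem hx.1 hy.1, ih _ hx.1 _ hy.1 hx.2 hy.2⟩
        inv_mem' := fun {x} hx => ⟨inv_mem hx.1, hx.2.inv⟩ }
    have hT : ∀ x, x ∈ T ↔ x ∈ Subgroup.upperCentralSeries G i ∧ IsOfFinOrder x := fun x => Iff.rfl
    have : T.Normal := ⟨fun x hx g =>
      ⟨Subgroup.Normal.conj_mem inferInstance _ hx.1 _, aux_conj hx.2 g⟩⟩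
    let q := QuotientGroup.mk' T
    have hq : Function.Surjective q := QuotientGroup.mk'_surjective T
    have hq1 : ∀ x, q x = 1 ↔ x ∈ T := fun x => QuotientGroup.eq_one_iff x
    have : ((Subgroup.upperCentralSeries G i).map q).Normal := Subgroup.Normal.map inferInstance q hq
    have hV : ∀ v ∈ (Subgroup.upperCentralSeries G i).map q, ∀ n : ℕ, 0 < n → v ^ n = 1 → v = 1 := by
      rintro _ ⟨v, hv, rfl⟩ n hn h
      rw [← map_pow, hq1, hT] at h
      rw [hq1]
      exact ⟨hv, aux_pow n hn h.2⟩
    have hc : ⁅b, a⁆ ∈ Subgroup.upperCentralSeries G i := Subgroup.mem_upperCentralSeries_succ_iff.mp hb a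
    obtain ⟨n, hn, han⟩ := isOfFinOrder_iff_pow_eq_one.mp fa
    have hcomm : Commute (q ⁅b, a⁆) (q a) := by
      apply aux_comm _ hV (q a) n hn i _ ⟨_, hc, rfl⟩ (aux_map_ucs q hq i _ hc)
      rw [← map_pow, han, map_one]
      exact Commute.one_right _
    have h1 : b * a * b⁻¹ = ⁅b, a⁆ * a := by simp [commutatorElement_def]
    have h2 : q ⁅b, a⁆ ^ n = 1 := by
      have h := congrArg (fun t => q (t ^ n)) h1
      simp only [conj_pow, han, map_pow, map_mul, hcomm.mul_pow] at h
      rw [← map_pow q a, han] at h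
      simpa using h.symm
    have h3 : q ⁅b, a⁆ = 1 := hV _ ⟨_, hc, rfl⟩ n hn h2
    have h4 : Commute (q b) (q a) := by
      rw [map_commutatorElement] at h3
      exact commutatorElement_eq_one_iff_commute.mp h3
    obtain ⟨k, hk, hbk⟩ := isOfFinOrder_iff_pow_eq_one.mp fb
    have h5 : q ((a * b) ^ (n * k)) = 1 := by
      rw [map_pow, map_mul, h4.symm.mul_pow, ← map_pow, ← map_pow, pow_mul, han, mul_comm n k,
        pow_mul, hbk]
      simp
    rw [hq1, hT] at h5
    exact aux_pow (n * k) (by positivity) h5.2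

open Subgroup commutatorElement in
theorem aux_tors_mul {G : Type*} [Group G] [hG : Group.IsNilpotent G] {a b : G}
    (ha : IsOfFinOrder a) (hb : IsOfFinOrder b) : IsOfFinOrder (a * b) := by
  obtain ⟨n, hn⟩ := hG.nilpotent'
  exact aux_tors_mul_ucs n a (hn ▸ mem_top _) b (hn ▸ mem_top _) ha hb

theorem aux_tors_mul_hom {G K : Type*} [Group G] [Group K] [hG : Group.IsNilpotent G]
    (f : G →* K) {a b : G}
    (ha : IsOfFinOrder (f a)) (hb : IsOfFinOrder (f b)) : IsOfFinOrder (f (a * b)) := by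
  have : Group.IsNilpotent f.range :=
    Group.nilpotent_of_surjective f.rangeRestrict f.rangeRestrict_surjective
  have h := aux_tors_mul (a := f.rangeRestrict a) (b := f.rangeRestrict b)
    (Submonoid.isOfFinOrder_coe.mp ha) (Submonoid.isOfFinOrder_coe.mp hb)
  rw [← map_mul] at h
  exact Submonoid.isOfFinOrder_coe.mpr h

open Subgroup commutatorElement in
/-- Abstract version: `G` nilpotent, `N` normal of finite exponent quotient, `f : N → K`. -/
theorem aux_main {G K : Type*} [Group G] [Group K] [hG : Group.IsNilpotent G]
    (N : Subgroup G) [hN : N.Normal] (k : ℕ) (hk : 0 < k) (hNk : ∀ g : G, g ^ k ∈ N)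
    (f : N →* K)
    (hf : ∀ u : N, (∀ g : G, IsOfFinOrder (f ⟨g * u * g⁻¹, hN.conj_mem u u.2 g⟩)) →
      IsOfFinOrder (u : G))
    (u : N) (hu : IsOfFinOrder (f u)) : IsOfFinOrder (u : G) := by
  obtain ⟨c, hc⟩ := hG.nilpotent'
  let T : Subgroup G :=
    { carrier := {x | IsOfFinOrder x}
      one_mem' := IsOfFinOrder.one
      mul_mem' := fun {x y} hx hy => aux_tors_mul hx hy
      inv_mem' := fun {x} hx => hx.inv }
  have hT : ∀ x, x ∈ T ↔ IsOfFinOrder x := fun x => Iff.rfl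
  have : T.Normal := ⟨fun x hx g => aux_conj hx g⟩
  let q := QuotientGroup.mk' T
  have hq : Function.Surjective q := QuotientGroup.mk'_surjective T
  have hq1 : ∀ x, q x = 1 ↔ x ∈ T := fun x => QuotientGroup.eq_one_iff x
  have hV : ∀ v ∈ (⊤ : Subgroup (G ⧸ T)), ∀ n : ℕ, 0 < n → v ^ n = 1 → v = 1 := by
    intro v _ n hn h
    obtain ⟨v, rfl⟩ := hq v
    rw [← map_pow, hq1, hT] at h
    rw [hq1]
    exact aux_pow n hn h
  have key : ∀ i : ℕ, ∀ u : N, (u : G) ∈ Subgroup.upperCentralSeries G i → IsOfFinOrder (f u) →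
      IsOfFinOrder (u : G) := by
    intro i
    induction i with
    | zero =>
      intro u hu _
      rw [Subgroup.upperCentralSeries_zero, mem_bot] at hu
      rw [hu]; exact IsOfFinOrder.one
    | succ i ih =>
      intro u hui hu
      have h1 : ∀ n : N, Commute (q u) (q n) := by
        intro n
        have h2 : IsOfFinOrder ((⁅u, n⁆ : N) : G) := by
          apply ih
          · exact Subgroup.mem_upperCentralSeries_succ_iff.mp hui n
          · have : ⁅u, n⁆ = u * (n * u⁻¹ * n⁻¹) := by simp [commutatorElement_def, mul_assoc]
            rw [this]
            apply aux_tors_mul_hom f hu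
            rw [map_mul, map_mul, map_inv, map_inv]
            exact aux_conj hu.inv _
        have h3 : q ⁅(u : G), (n : G)⁆ = 1 := (hq1 _).mpr h2
        rw [map_commutatorElement] at h3
        exact commutatorElement_eq_one_iff_commute.mp h3
      apply hf
      intro g
      have h4 : Commute (q u) (q g) := by
        apply aux_comm ⊤ hV (q g) k hk (i+1) _ (mem_top _) (aux_map_ucs q hq _ _ hui)
        rw [← map_pow]
        exact h1 ⟨g ^ k, hNk g⟩
      let v : N := ⟨g * u * g⁻¹, hN.conj_mem u u.2 g⟩
      have h5 : q ((v * u⁻¹ : N) : G) = 1 := by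
        simp only [v, Subgroup.coe_mul, Subgroup.coe_inv, map_mul, map_inv]
        rw [← h4.eq]; simp
      have h6 : IsOfFinOrder (v * u⁻¹) := Submonoid.isOfFinOrder_coe.mp ((hq1 _).mp h5)
      have h7 := aux_tors_mul_hom f (f.isOfFinOrder h6) hu
      simpa [v] using h7
  exact key c u (hc ▸ mem_top _) hu

theorem aux_conj_left {K : Type*} [Group K] {m : ℕ} (g u : WreathPerm K m) (hu : u.right = 1)
    (o : Fin m) :
    (g * u * g⁻¹).left o = g.left o * u.left (g.right⁻¹ o) * (g.left o)⁻¹ := by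
  rw [SemidirectProduct.mul_left, SemidirectProduct.mul_left, SemidirectProduct.mul_right,
    SemidirectProduct.inv_left, hu, mul_one, ← MulAut.mul_apply, ← map_mul,
    mul_inv_cancel, map_one]
  rfl

theorem stmt_11 {K : Type*} [Group K] (m : ℕ) (hm : 0 < m)
    (G : Subgroup (WreathPerm K m)) [Group.IsNilpotent G]
    (htrans : ∀ i j : Fin m, ∃ g ∈ G, g.right i = j)
    (x : WreathPerm K m) (hxG : x ∈ G)
    (hfix : x.right ⟨0, hm⟩ = ⟨0, hm⟩)
    (hfin : IsOfFinOrder (x.left ⟨0, hm⟩)) :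
    IsOfFinOrder x := by
  set o : Fin m := ⟨0, hm⟩ with ho
  let r : G →* Equiv.Perm (Fin m) := SemidirectProduct.rightHom.comp G.subtype
  have hr : ∀ g : G, r g = (g : WreathPerm K m).right := fun g => rfl
  have hr1 : ∀ u : r.ker, ((u : G) : WreathPerm K m).right = 1 := fun u => u.2
  let k := Fintype.card (Equiv.Perm (Fin m))
  have hk : 0 < k := Fintype.card_pos
  have hNk : ∀ g : G, g ^ k ∈ r.ker := by
    intro g
    rw [MonoidHom.mem_ker, map_pow]
    exact pow_card_eq_one
  let f : r.ker →* K :=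
    { toFun := fun u => ((u : G) : WreathPerm K m).left o
      map_one' := rfl
      map_mul' := fun u v => by
        simp [hr1 u] }
  have hf : ∀ u : r.ker, (∀ g : G, IsOfFinOrder (f ⟨g * u * g⁻¹,
      (MonoidHom.normal_ker r).conj_mem u u.2 g⟩)) → IsOfFinOrder (u : G) := by
    intro u hu
    rw [← Submonoid.isOfFinOrder_coe]
    have h1 : ((u : G) : WreathPerm K m)
        = SemidirectProduct.inl ((u : G) : WreathPerm K m).left := by
      ext1
      · simp
      · simp [hr1 u]
    change IsOfFinOrder ((u : G) : WreathPerm K m)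
    rw [h1]
    apply MonoidHom.isOfFinOrder
    apply IsOfFinOrder.pi
    intro i
    obtain ⟨g, hg, hgi⟩ := htrans i o
    have h2 : IsOfFinOrder ((g * ((u : G) : WreathPerm K m) * g⁻¹).left o) := hu ⟨g, hg⟩
    have h3 : g.right⁻¹ o = i := by rw [← hgi]; simp
    have h4 := aux_conj_left g _ (hr1 u) o
    rw [h3] at h4
    rw [h4] at h2
    have h5 := aux_conj h2 (g.left o)⁻¹
    simpa [mul_assoc] using h5
  have hp : ∀ n : ℕ, (x ^ n).right o = o ∧ (x ^ n).left o = x.left o ^ n := by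
    intro n
    induction n with
    | zero => exact ⟨rfl, by simp⟩
    | succ n ih =>
      constructor
      · rw [pow_succ, SemidirectProduct.mul_right, Equiv.Perm.mul_apply, hfix, ih.1]
      · rw [pow_succ, SemidirectProduct.mul_left, pow_succ]
        change (x ^ n).left o * x.left ((x ^ n).right⁻¹ o) = _
        rw [Equiv.Perm.inv_eq_iff_eq.mpr ih.1.symm, ih.2]
  have hmain := aux_main r.ker k hk hNk f hf ⟨⟨x, hxG⟩ ^ k, hNk _⟩ (by
    change IsOfFinOrder ((x ^ k).left o)
    rw [(hp k).2]
    exact hfin.pow)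
  have := aux_pow k hk hmain
  exact Submonoid.isOfFinOrder_coe.mpr this
end

section
/- Let G be a finitely generated nilpotent group, H ≤ G with [G : H] = p a prime, and f : H → G a homomorphism with trivial f-core. Then G is either a finite p-group or free abelian. -/
open Subgroup
open scoped commutatorElement

namespace Stmt18

lemma comm_pow_of_comm {Q : Type*} [Group Q] (x g : Q) (hc : Commute ⁅x, g⁆ x) (n : ℕ) :
    ⁅x ^ n, g⁆ = ⁅x, g⁆ ^ n := by
  have h1 : g * x⁻¹ * g⁻¹ = x⁻¹ * ⁅x, g⁆ := by simp [commutatorElement_def]; group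
  have h2 : ⁅x ^ n, g⁆ = x ^ n * (g * x⁻¹ * g⁻¹) ^ n := by
    rw [conj_pow, commutatorElement_def]; group
  rw [h2, h1, (hc.inv_right).symm.mul_pow]; simp

lemma pow_mod {G : Type*} [Group G] (K : Subgroup G) [K.Normal] {x g : G}
    (hc : ∀ y, ⁅⁅x, g⁆, y⁆ ∈ K) (n : ℕ) :
    ((⁅x ^ n, g⁆ : G) : G ⧸ K) = ((⁅x, g⁆ ^ n : G) : G ⧸ K) := by
  have := comm_pow_of_comm (x : G ⧸ K) (g : G ⧸ K) (by
    rw [← commutatorElement_eq_one_iff_commute]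
    exact (QuotientGroup.eq_one_iff _).2 (hc x)) n
  exact this

lemma mul_pow_mod {G : Type*} [Group G] (K : Subgroup G) [K.Normal] {u : G}
    (hc : ∀ y, ⁅u, y⁆ ∈ K) (h : G) (n : ℕ) :
    (((u * h) ^ n : G) : G ⧸ K) = ((u ^ n * h ^ n : G) : G ⧸ K) := by
  have : Commute (u : G ⧸ K) (h : G ⧸ K) := by
    rw [← commutatorElement_eq_one_iff_commute]
    exact (QuotientGroup.eq_one_iff _).2 (hc h)
  exact this.mul_pow n

/-- relative lower central series -/
def relSer {G : Type*} [Group G] (N : Subgroup G) : ℕ → Subgroup G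
  | 0 => N
  | i + 1 => ⁅relSer N i, ⊤⁆

lemma relSer_normal {G : Type*} [Group G] (N : Subgroup G) [N.Normal] (i : ℕ) :
    (relSer N i).Normal := by
  induction i with
  | zero => simpa [relSer]
  | succ i ih => simp only [relSer]; infer_instance

lemma relSer_le {G : Type*} [Group G] (N : Subgroup G) (i : ℕ) :
    relSer N i ≤ (⊤ : Subgroup G).lowerCentralSeries i := by
  induction i with
  | zero => simp [relSer]
  | succ i ih => 
    simp only [relSer, Subgroup.lowerCentralSeries_succ]
    exact commutator_mono ih le_rfl

/-- subgroup generated by solutions of `x ^ m = 1`. -/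
def tor (G : Type*) [Group G] (m : ℕ) : Subgroup G := closure {x | x ^ m = 1}


lemma tor_map {G G' : Type*} [Group G] [Group G'] (f : G →* G') (m : ℕ) :
    (tor G m).map f ≤ tor G' m := by
  rw [tor, MonoidHom.map_closure, closure_le]
  rintro _ ⟨x, hx, rfl⟩
  apply Subgroup.subset_closure
  change f x ^ m = 1
  rw [← map_pow, hx, map_one]

instance tor_normal (G : Type*) [Group G] (m : ℕ) : (tor G m).Normal := by
  constructor
  intro n hn g
  exact tor_map (MulAut.conj g).toMonoidHom m ⟨n, hn, by simp⟩

lemma pow_closure {G : Type*} [Group G] (S : Set G) (K M : Subgroup G) [K.Normal] (hKM : K ≤ M)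
    (m : ℕ) (hS : ∀ x ∈ closure S, ∀ y, ⁅x, y⁆ ∈ K) (hm : ∀ s ∈ S, s ^ m ∈ M) :
    ∀ x ∈ closure S, x ^ m ∈ M := by
  intro x hx
  induction hx using closure_induction with
  | mem x hx => exact hm x hx
  | one => simp
  | mul x y hx hy ihx ihy =>
    have h := mul_pow_mod K (hS x hx) y m
    rw [eq_comm, QuotientGroup.eq] at h
    have := M.mul_mem (M.mul_mem ihx ihy) (hKM h)
    rwa [mul_inv_cancel_left] at this
  | inv x hx ih => simpa using ih

lemma tor_step {G : Type*} [Group G] (m : ℕ) (i : ℕ) :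
    ∀ x ∈ relSer (tor G m) i, x ^ m ∈ relSer (tor G m) (i + 1) := by
  have hn := relSer_normal (tor G m)
  induction i with
  | zero =>
    refine pow_closure _ _ _ le_rfl m ?_ ?_
    · intro x hx y
      exact commutator_mem_commutator hx (mem_top y)
    · intro s hs
      rw [show s ^ m = 1 from hs]; exact one_mem _
  | succ i ih =>
    refine pow_closure _ _ _ le_rfl m ?_ ?_
    · intro x hx y
      exact commutator_mem_commutator hx (mem_top y)
    · rintro _ ⟨x, hx, g, -, rfl⟩
      have h := pow_mod (relSer (tor G m) (i + 1 + 1)) (x := x) (g := g) (fun y =>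
        commutator_mem_commutator (commutator_mem_commutator hx (mem_top g)) (mem_top y)) m
      rw [QuotientGroup.eq] at h
      have h2 : ⁅x ^ m, g⁆ ∈ relSer (tor G m) (i + 1 + 1) :=
        commutator_mem_commutator (ih x hx) (mem_top g)
      have h3 := mul_mem h2 h
      rwa [mul_inv_cancel_left] at h3

lemma tor_mul_pow {G : Type*} [Group G] (m c : ℕ)
    (hc : (⊤ : Subgroup G).lowerCentralSeries c = ⊥) (j : ℕ) :
    ∀ i, i + j = c → ∀ u ∈ relSer (tor G m) i, ∀ h : G, (u * h) ^ (m ^ j) = h ^ (m ^ j) := by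
  have hn := relSer_normal (tor G m)
  induction j with
  | zero =>
    intro i hi u hu h
    have : u ∈ (⊥ : Subgroup G) := by
      rw [← hc, ← hi]; exact relSer_le _ _ hu
    rw [mem_bot] at this
    simp [this]
  | succ j ih =>
    intro i hi u hu h
    have h1 := mul_pow_mod (relSer (tor G m) (i + 1)) (u := u) (fun y =>
        commutator_mem_commutator hu (mem_top y)) h m
    have h2 : (u * h) ^ m / h ^ m ∈ relSer (tor G m) (i + 1) := by
      rw [← QuotientGroup.eq_one_iff, QuotientGroup.mk_div, h1, QuotientGroup.mk_mul,
        mul_div_cancel_right]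
      exact (QuotientGroup.eq_one_iff _).2 (tor_step m i u hu)
    have h3 := ih (i + 1) (by omega) _ h2 (h ^ m)
    rw [div_mul_cancel] at h3
    rw [pow_succ', pow_mul, pow_mul, h3]

/-- the key torsion lemma -/
lemma tor_exists {G : Type*} [Group G] [Group.IsNilpotent G] : ∃ c : ℕ, ∀ m : ℕ,
    ∀ u ∈ tor G m, ∀ h : G, (u * h) ^ (m ^ c) = h ^ (m ^ c) := by
  obtain ⟨c, hc⟩ := (Subgroup.nilpotent_iff_lowerCentralSeries (G := G)).1 inferInstance
  exact ⟨c, fun m u hu h => tor_mul_pow m c hc c 0 (by simp) u hu h⟩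

lemma finite_of_torsion {G : Type*} [Group G] [Group.IsNilpotent G] (hfg : Group.FG G)
    (n : ℕ) (hn : 0 < n) (h : ∀ x : G, x ^ n = 1) : Finite G := by
  have key : ∀ k, (derivedSeries G k).FiniteIndex := by
    intro k
    induction k with
    | zero => rw [derivedSeries_zero]; infer_instance
    | succ k ih =>
      set D := derivedSeries G k
      have : Group.FG D := inferInstance
      have : Group.FG (Abelianization D) := QuotientGroup.fg (commutator D)
      have hf : Finite (Abelianization D) := by
        apply CommGroup.finite_of_fg_isMulTorsion
        intro x
        rw [isOfFinOrder_iff_pow_eq_one]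
        refine ⟨n, hn, ?_⟩
        induction x using QuotientGroup.induction_on with
        | H z =>
          have : z ^ n = 1 := Subtype.ext (by simpa using h z)
          change Abelianization.of z ^ n = 1
          rw [← map_pow, this, map_one]
      have hi : (commutator D).FiniteIndex := ⟨by
        rw [index_eq_card]; exact (Nat.card_pos (α := Abelianization D)).ne'⟩
      constructor
      rw [derivedSeries_succ, ← map_subtype_commutator, index_map_subtype]
      exact mul_ne_zero hi.1 ih.1
  obtain ⟨k, hk⟩ := (Group.isSolvable_def G).1 inferInstance
  have := (key k).1
  rw [hk, index_bot] at this
  exact Nat.finite_of_card_ne_zero this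

lemma upper_tf {G : Type*} [Group G] (htf : ∀ (x : G) (n : ℕ), 0 < n → x ^ n = 1 → x = 1)
    (m : ℕ) (hm : 0 < m) (i : ℕ) : ∀ x ∈ Subgroup.upperCentralSeries G (i + 1),
    x ^ m ∈ Subgroup.upperCentralSeries G i → x ∈ Subgroup.upperCentralSeries G i := by
  induction i with
  | zero =>
    intro x _ h
    simp at h ⊢
    exact htf x m hm h
  | succ i ih =>
    intro x hx h g
    have hy : ⁅x, g⁆ ∈ Subgroup.upperCentralSeries G (i + 1) := hx g
    apply ih _ hy
    have h1 := pow_mod (Subgroup.upperCentralSeries G i) (x := x) (g := g) (fun y => hy y) m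
    rw [QuotientGroup.eq] at h1
    have h2 : ⁅x ^ m, g⁆ ∈ Subgroup.upperCentralSeries G i := h g
    have h3 := mul_mem h2 h1
    rwa [mul_inv_cancel_left] at h3

lemma center_tf {G : Type*} [Group G] [Group.IsNilpotent G]
    (htf : ∀ (x : G) (n : ℕ), 0 < n → x ^ n = 1 → x = 1)
    (m : ℕ) (hm : 0 < m) (x : G) (h : x ^ m ∈ center G) : x ∈ center G := by
  obtain ⟨c, hc⟩ := Group.IsNilpotent.nilpotent G
  have : ∀ i, x ∈ Subgroup.upperCentralSeries G (i + 1) → x ∈ Subgroup.upperCentralSeries G 1 := by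
    intro i
    induction i with
    | zero => exact id
    | succ i ih =>
      intro hx
      refine ih (upper_tf htf m hm (i + 1) x hx ?_)
      rw [← Subgroup.upperCentralSeries_one] at h
      exact Subgroup.upperCentralSeries_mono G (by omega) h
  rw [← Subgroup.upperCentralSeries_one]
  apply this c
  apply Subgroup.upperCentralSeries_mono G (Nat.le_succ c)
  rw [hc]; exact mem_top x

lemma lower_pow {G : Type*} [Group G] (H : Subgroup G) (p : ℕ) (hH : ∀ x : G, x ^ p ∈ H) (i : ℕ) :
    ∀ x ∈ (⊤ : Subgroup G).lowerCentralSeries i,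
      x ^ (p ^ (i + 1)) ∈ H.lowerCentralSeries i ⊔ (⊤ : Subgroup G).lowerCentralSeries (i + 1) := by
  induction i with
  | zero =>
    intro x _
    exact mem_sup_left (by simpa using hH x)
  | succ i ih =>
    refine pow_closure _ ((⊤ : Subgroup G).lowerCentralSeries (i + 1 + 1)) _ le_sup_right _ ?_ ?_
    · intro x hx y
      exact commutator_mem_commutator hx (mem_top y)
    · rintro _ ⟨x, hx, g, -, rfl⟩
      set K := (⊤ : Subgroup G).lowerCentralSeries (i + 1 + 1) with hK
      have hcen : ∀ x ∈ (⊤ : Subgroup G).lowerCentralSeries i, ∀ g y, ⁅⁅x, g⁆, y⁆ ∈ K :=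
        fun x hx g y => commutator_mem_commutator
          (commutator_mem_commutator hx (mem_top g)) (mem_top y)
      have h1 := pow_mod K (hcen x hx g) (p ^ (i + 1))
      obtain ⟨a, ha, b, hb, hab⟩ := mem_sup_of_normal_right.1 (ih x hx)
      have ha' : a ∈ (⊤ : Subgroup G).lowerCentralSeries i :=
        lowerCentralSeries_mono i le_top ha
      have h2 : ((⁅a, g ^ p⁆ : G) : G ⧸ K) = ((⁅a, g⁆ ^ p : G) : G ⧸ K) := by
        have hcg := hcen a ha' g
        have hc' : ∀ y, ⁅⁅g, a⁆, y⁆ ∈ K := by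
          intro y
          rw [← commutatorElement_inv a g]
          exact commutator_mem_commutator
            (inv_mem (commutator_mem_commutator ha' (mem_top g))) (mem_top y)
        have := pow_mod K hc' p
        rw [← commutatorElement_inv (g ^ p) a, ← commutatorElement_inv g a, inv_pow]
        rw [QuotientGroup.mk_inv, QuotientGroup.mk_inv, this]
      have h3 : ((⁅a * b, g⁆ : G) : G ⧸ K) = ((⁅a, g⁆ : G) : G ⧸ K) := by
        have hbg : ⁅b, g⁆ ∈ K := commutator_mem_commutator hb (mem_top g)
        have : ⁅a * b, g⁆ = a * ⁅b, g⁆ * a⁻¹ * ⁅a, g⁆ := by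
          simp only [commutatorElement_def]; group
        rw [this, QuotientGroup.mk_mul, (QuotientGroup.eq_one_iff _).2
          (Normal.conj_mem inferInstance _ hbg a), one_mul]
      have h4 : ((⁅x, g⁆ ^ p ^ (i + 1 + 1) : G) : G ⧸ K) = ((⁅a, g ^ p⁆ : G) : G ⧸ K) := by
        rw [h2, pow_succ, pow_mul, QuotientGroup.mk_pow, ← h1, ← hab, h3, QuotientGroup.mk_pow]
      rw [eq_comm, QuotientGroup.eq] at h4
      have h5 : ⁅a, g ^ p⁆ ∈ H.lowerCentralSeries (i + 1) :=
        commutator_mem_commutator ha (hH g)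
      have h6 := mul_mem (mem_sup_left h5) (mem_sup_right (S := H.lowerCentralSeries (i + 1)) h4)
      rwa [mul_inv_cancel_left] at h6

/-- torsion subgroup of a nilpotent group -/
def torSub (G : Type*) [Group G] [Group.IsNilpotent G] : Subgroup G where
  carrier := {x | ∃ m : ℕ, 0 < m ∧ x ^ m = 1}
  one_mem' := ⟨1, one_pos, by simp⟩
  inv_mem' := by rintro x ⟨m, hm, h⟩; exact ⟨m, hm, by simp [h]⟩
  mul_mem' := by
    rintro x y ⟨m, hm, h⟩ ⟨n, hn, h'⟩
    obtain ⟨c, hc⟩ := tor_exists (G := G)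
    refine ⟨(m * n) ^ c, by positivity, ?_⟩
    have hx : x ∈ tor G (m * n) := Subgroup.subset_closure (by
      change x ^ (m * n) = 1
      rw [pow_mul, h, one_pow])
    have hy : y ∈ tor G (m * n) := Subgroup.subset_closure (by
      change y ^ (m * n) = 1
      rw [mul_comm, pow_mul, h', one_pow])
    simpa using hc (m * n) _ (mul_mem hx hy) 1

lemma free_of_comm {G : Type*} [Group G] (hfg : Group.FG G)
    (htf : ∀ (x : G) (n : ℕ), 0 < n → x ^ n = 1 → x = 1) (hcomm : ∀ a b : G, a * b = b * a) :
    ∃ n : ℕ, Nonempty (G ≃* Multiplicative (Fin n → ℤ)) := by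
  let _ : CommGroup G := { ‹Group G› with mul_comm := hcomm }
  have : AddGroup.FG (Additive G) := inferInstance
  have : Module.Finite ℤ (Additive G) := Module.Finite.iff_addGroup_fg.mpr this
  have : Module.IsTorsionFree ℤ (Additive G) := by
    have h : IsMulTorsionFree G := by
      refine ⟨fun n hn a b hab => ?_⟩
      have h1 : (a / b) ^ n = 1 := by
        rw [div_pow, div_eq_one]; exact hab
      exact div_eq_one.1 (htf _ n (Nat.pos_of_ne_zero hn) h1)
    have : IsAddTorsionFree (Additive G) := inferInstance
    infer_instance
  have : Module.Free ℤ (Additive G) := inferInstance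
  let b := Module.finBasis ℤ (Additive G)
  exact ⟨_, ⟨AddEquiv.toMultiplicativeRight b.equivFun.toAddEquiv⟩⟩

end Stmt18

open Stmt18
theorem stmt_18 {G : Type*} [Group G] [Group.IsNilpotent G] (hfg : Group.FG G)
    (H : Subgroup G) (p : ℕ) (hp : p.Prime) (hindex : H.index = p)
    (f : H →* G)
    (hsimple : ∀ K : Subgroup G, (hKH : K ≤ H) → K.Normal →
      (∀ x : G, (hx : x ∈ K) → f ⟨x, hKH hx⟩ ∈ K) → K = ⊥) :
    (Finite G ∧ IsPGroup p G) ∨ ∃ n : ℕ, Nonempty (G ≃* Multiplicative (Fin n → ℤ)) := by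
  have hmax : ∀ N : Subgroup G, H ≤ N → ¬ N ≤ H → N = ⊤ := by
    intro N hN hN'
    have h1 := relIndex_mul_index hN
    rw [hindex] at h1
    rcases hp.eq_one_or_self_of_dvd _ (Dvd.intro_left _ h1) with h | h
    · exact index_eq_one.1 h
    · rw [h] at h1
      exact absurd (relIndex_eq_one.1 (Nat.eq_of_mul_eq_mul_right hp.pos (by simpa using h1))) hN'
  have hHne : H ≠ ⊤ := by
    rintro rfl
    rw [index_top] at hindex
    exact hp.one_lt.ne hindex
  have hHn : H.Normal := by
    refine NormalizerCondition.normal_of_coatom H Group.normalizerCondition_of_isNilpotent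
      ⟨hHne, fun N hN => hmax N hN.le hN.not_ge⟩
  have hHpow : ∀ x : G, x ^ p ∈ H := fun x => hindex ▸ H.pow_index_mem x
  have hprod : ∀ N : Subgroup G, ¬ N ≤ H → ∀ g : G, ∃ u ∈ N, ∃ h ∈ H, u * h = g := by
    intro N hN g
    have : N ⊔ H = ⊤ := hmax _ le_sup_right (fun h => hN (le_sup_left.trans h))
    exact mem_sup_of_normal_right.1 (this ▸ mem_top g)
  obtain ⟨c, hc⟩ := tor_exists (G := G)
  by_cases hT : torSub G ≤ H
  · right
    have hTn : (torSub G).Normal := by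
      constructor
      rintro x ⟨m, hm, h⟩ g
      exact ⟨m, hm, by rw [conj_pow, h]; simp⟩
    have hTbot := hsimple _ hT hTn (by
      rintro x ⟨m, hm, h⟩
      exact ⟨m, hm, by
        have e : (⟨x, hT ⟨m, hm, h⟩⟩ : H) ^ m = 1 := Subtype.ext h
        exact (map_pow f _ _).symm.trans ((congrArg f e).trans (map_one f))⟩)
    have htf : ∀ (x : G) (n : ℕ), 0 < n → x ^ n = 1 → x = 1 := by
      intro x n hn h
      have : x ∈ torSub G := ⟨n, hn, h⟩
      rwa [hTbot, mem_bot] at this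
    apply free_of_comm hfg htf
    by_cases hZ : center G ≤ H
    · skip
      by_contra hnc
      have hex := (Subgroup.nilpotent_iff_lowerCentralSeries (G := G)).1 inferInstance
      classical
      obtain ⟨k, hk, hk'⟩ : ∃ k, (⊤ : Subgroup G).lowerCentralSeries (k + 1) = ⊥ ∧
          (⊤ : Subgroup G).lowerCentralSeries k ≠ ⊥ := by
        have h0 : Nat.find hex ≠ 0 := by
          intro h0
          have := Nat.find_spec hex
          rw [h0, Subgroup.lowerCentralSeries_zero] at this
          apply hnc
          intro a b
          have ha : ∀ a : G, a = 1 := fun a => by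
            rw [← mem_bot, ← this]; exact mem_top a
          rw [ha a, ha b]
        obtain ⟨k, hk⟩ := Nat.exists_eq_succ_of_ne_zero h0
        refine ⟨k, ?_, Nat.find_min hex (by omega)⟩
        have := Nat.find_spec hex
        rwa [hk] at this
      set L := (⊤ : Subgroup G).lowerCentralSeries k with hL
      have hLZ : L ≤ center G := by
        intro x hx
        rw [mem_center_iff]
        intro g
        have : ⁅x, g⁆ ∈ (⊤ : Subgroup G).lowerCentralSeries (k + 1) :=
          commutator_mem_commutator hx (mem_top g)
        rw [hk, mem_bot, commutatorElement_eq_one_iff_mul_comm] at this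
        exact this.symm
      let I : Subgroup G :=
        { carrier := {x | ∃ m : ℕ, 0 < m ∧ x ^ m ∈ L}
          one_mem' := ⟨1, one_pos, by simp⟩
          inv_mem' := by rintro x ⟨m, hm, h⟩; exact ⟨m, hm, by simpa using h⟩
          mul_mem' := by
            rintro x y ⟨m, hm, h⟩ ⟨n, hn, h'⟩
            have hx : x ∈ center G := center_tf htf m hm x (hLZ h)
            have hxy : Commute x y := (mem_center_iff.1 hx y).symm
            refine ⟨m * n, by positivity, ?_⟩
            rw [hxy.mul_pow]
            refine mul_mem ?_ ?_
            · rw [pow_mul]; exact pow_mem h _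
            · rw [mul_comm, pow_mul]; exact pow_mem h' _ }
      have hIZ : I ≤ center G := by
        rintro x ⟨m, hm, h⟩
        exact center_tf htf m hm x (hLZ h)
      have hIn : I.Normal := by
        constructor
        intro x hx g
        rw [mem_center_iff.1 (hIZ hx) g, mul_inv_cancel_right]
        exact hx
      have hIbot := hsimple I (hIZ.trans hZ) hIn (by
        rintro x ⟨m, hm, h⟩
        have h1 := lower_pow H p hHpow k _ h
        rw [hk, sup_bot_eq, ← pow_mul] at h1
        refine ⟨m * p ^ (k + 1), Nat.mul_pos hm (pow_pos hp.pos _), ?_⟩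
        rw [← Subgroup.top_subtype_lowerCentralSeries] at h1
        obtain ⟨y, hy, hyx⟩ := h1
        have h2 : f y ∈ ((⊤ : Subgroup H).lowerCentralSeries k).map f := ⟨y, hy, rfl⟩
        rw [Subgroup.map_lowerCentralSeries] at h2
        rw [← map_pow]
        have : (⟨x, hZ (center_tf htf m hm x (hLZ h))⟩ : H) ^ (m * p ^ (k + 1)) = y :=
          Subtype.ext hyx.symm
        rw [this]
        exact Subgroup.lowerCentralSeries_mono k le_top h2)
      apply hk'
      rw [eq_bot_iff, ← hIbot]
      intro x hx
      exact ⟨1, one_pos, by simpa using hx⟩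
    · have hGH : ∀ a b : G, ⁅a, b⁆ ∈ ⁅H, H⁆ := by
        intro a b
        obtain ⟨z, hz, h, hh, rfl⟩ := hprod _ hZ a
        obtain ⟨z', hz', h', hh', rfl⟩ := hprod _ hZ b
        have : ⁅z * h, z' * h'⁆ = ⁅h, h'⁆ := by
          have e1 : ∀ z ∈ center G, ∀ w y : G, ⁅z * w, y⁆ = ⁅w, y⁆ := by
            intro z hz w y
            have e : ⁅z * w, y⁆ = z * (w * y * w⁻¹) * z⁻¹ * y⁻¹ := by
              rw [commutatorElement_def]; group
            rw [e, ← mem_center_iff.1 hz, mul_inv_cancel_right, commutatorElement_def]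
          rw [e1 z hz, ← commutatorElement_inv (z' * h') h, e1 z' hz', commutatorElement_inv]
        rw [this]
        exact commutator_mem_commutator hh hh'
      have hle : ⁅H, H⁆ ≤ H := commutator_le_self H
      have hbot := hsimple ⁅H, H⁆ hle inferInstance (by
        intro x hx
        have hx' := hx
        rw [← map_subtype_commutator] at hx'
        obtain ⟨y, hy, rfl⟩ := hx'
        have h2 : f y ∈ (commutator H).map f := ⟨y, hy, rfl⟩
        have h3 : (commutator H).map f ≤ ⁅H, H⁆ := by
          rw [_root_.commutator_def, map_commutator, commutator_le]
          intro a _ b _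
          exact hGH a b
        exact h3 h2)
      intro a b
      have := hGH a b
      rwa [hbot, mem_bot, commutatorElement_eq_one_iff_mul_comm] at this
  · left
    obtain ⟨t, ⟨m, hm, ht⟩, htH⟩ := SetLike.not_le_iff_exists.1 hT
    have hN : ¬ tor G m ≤ H := fun h => htH (h (Subgroup.subset_closure ht))
    set n := m ^ c with hn
    have hn0 : 0 < n := pow_pos hm c
    have hgh : ∀ g : G, ∃ h ∈ H, g ^ n = h ^ n := by
      intro g
      obtain ⟨u, hu, h, hh, rfl⟩ := hprod _ hN g
      exact ⟨h, hh, hc m u hu h⟩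
    let K : Subgroup G := closure {x | ∃ g : G, g ^ n = x}
    have hK : ((closure {x : H | ∃ g : H, g ^ n = x}).map H.subtype) = K := by
      rw [MonoidHom.map_closure]
      congr 1
      ext x
      constructor
      · rintro ⟨_, ⟨g, rfl⟩, rfl⟩
        exact ⟨g, by simp⟩
      · rintro ⟨g, rfl⟩
        obtain ⟨h, hh, e⟩ := hgh g
        exact ⟨_, ⟨⟨h, hh⟩, rfl⟩, by simp [e]⟩
    have hKH : K ≤ H := by rw [← hK]; exact map_subtype_le _
    have hKmap : ∀ {A : Type _} [Group A] (φ : A →* G),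
        (closure {x : A | ∃ g : A, g ^ n = x}).map φ ≤ K := by
      intro A _ φ
      rw [MonoidHom.map_closure, closure_le]
      rintro _ ⟨_, ⟨g, rfl⟩, rfl⟩
      exact Subgroup.subset_closure ⟨φ g, by simp⟩
    have hKn : K.Normal := by
      constructor
      intro x hx g
      exact hKmap (MulAut.conj g).toMonoidHom ⟨x, hx, by simp⟩
    have hKbot := hsimple K hKH hKn (by
      intro x hx
      have hx' := hx
      rw [← hK] at hx'
      obtain ⟨y, hy, rfl⟩ := hx'
      exact hKmap f ⟨y, hy, rfl⟩)
    have hexp : ∀ g : G, g ^ n = 1 := by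
      intro g
      rw [← mem_bot, ← hKbot]
      exact Subgroup.subset_closure ⟨g, rfl⟩
    refine ⟨finite_of_torsion hfg n hn0 hexp, ?_⟩
    obtain ⟨k, q, hq, hnq⟩ := Nat.exists_eq_pow_mul_and_not_dvd hn0.ne' p hp.ne_one
    have hqH : tor G q ≤ H := by
      intro x hx
      have h1 : x ^ (q ^ c) = 1 := by simpa using hc q x hx 1
      have hcop : Nat.Coprime (q ^ c) p :=
        Nat.Coprime.pow_left _ ((Nat.Prime.coprime_iff_not_dvd hp).2 hq).symm
      have h2 : orderOf x ∣ q ^ c := orderOf_dvd_of_pow_eq_one h1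
      obtain ⟨r, hr⟩ := exists_pow_eq_self_of_coprime (x := x) (hcop.coprime_dvd_left h2).symm
      rw [← hr]
      exact pow_mem (hHpow x) r
    have hqbot := hsimple (tor G q) hqH inferInstance (by
      have hle : tor G q ≤ (tor H q).map H.subtype := by
        rw [tor, closure_le]
        intro y hy
        exact ⟨⟨y, hqH (Subgroup.subset_closure hy)⟩,
          Subgroup.subset_closure (Subtype.ext hy), rfl⟩
      intro x hx
      obtain ⟨y, hy, rfl⟩ := hle hx
      exact tor_map f q ⟨y, hy, rfl⟩)
    intro x
    refine ⟨k, ?_⟩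
    rw [← mem_bot, ← hqbot]
    refine Subgroup.subset_closure ?_
    change (x ^ p ^ k) ^ q = 1
    rw [← pow_mul, ← hnq, hexp]
end
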